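/- For any real numbers 0 < α < β, the graph F = {(x, λ(x)) : α < x < β} ⊆ ℝ² has box dimension 3/2; that is, log N_δ(F)/(−log δ) → 3/2 as δ → 0⁺, where N_δ(F) is the number of δ-mesh squares of ℝ² that intersect F. -/

import Mathlib

open Filter

/-- The partial sum `Σ_w(i, n) = w(i) + w(i+1) + ⋯ + w(i+n−1)`. -/
def pSum (w : ℕ → ℤ) (i n : ℕ) : ℤ := ∑ j ∈ Finset.range n, w (i + j)

/-- `N_δ(F)`: the number of δ-mesh squares
`[m₁δ, (m₁+1)δ] × [m₂δ, (m₂+1)δ]` (with `m₁, m₂ ∈ ℤ`) of `ℝ²` that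
intersect the set `F`. -/
noncomputable def meshCount (F : Set (ℝ × ℝ)) (δ : ℝ) : ℕ :=
  {p : ℤ × ℤ |
    ((Set.Icc ((p.1 : ℝ) * δ) (((p.1 : ℝ) + 1) * δ) ×ˢ
      Set.Icc ((p.2 : ℝ) * δ) (((p.2 : ℝ) + 1) * δ)) ∩ F).Nonempty}.ncard

/-!
The recursion `M (4n) = 2 M(n) + 2` for `n ≥ 1` makes `g x = √x λ(x)` computable at the points
`n / 4 ^ j`, where it is exactly `(M n + 2) / 2 ^ j`. As `M (n + 1) = M n ± 1`, adjacent such points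
have values `2⁻ʲ` apart, so `g` oscillates by a multiple of `√δ` on every interval of length `δ`.
Conversely, any `n` consecutive terms of the Rudin–Shapiro sequence sum to `O(√n)`, so `g` is
`1/2`-Hölder. Both properties pass to `λ`, since dividing by `√x` only adds an error linear in `δ`
away from `0`. Over each of the `≍ δ⁻¹` mesh columns the graph of such a function meets `≍ δ^(-1/2)`
mesh squares, `≍ δ^(-3/2)` in total.
-/

open scoped Topology NNReal Finset
open Asymptotics

/-! ### Maximal window sums -/

section pSum

variable (w : ℕ → ℤ)

lemma pSum_succ (i n : ℕ) : pSum w i (n + 1) = pSum w i n + w (i + n) :=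
  Finset.sum_range_succ _ n

lemma pSum_add (i m n : ℕ) : pSum w i (m + n) = pSum w i m + pSum w (i + m) n := by
  simp only [pSum, Finset.sum_range_add, add_assoc]

lemma pSum_eq_sub {i n j : ℕ} (h : i + n = j) : pSum w i n = pSum w 0 j - pSum w 0 i := by
  rw [← h, pSum_add, zero_add]
  ring

variable {w}

lemma abs_pSum_le (hw : ∀ n, |w n| ≤ 1) (i n : ℕ) : |pSum w i n| ≤ n :=
  (Finset.abs_sum_le_sum_abs _ _).trans <|
    (Finset.sum_le_card_nsmul _ _ 1 fun j _ => hw (i + j)).trans_eq (by simp)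

lemma even_pSum_sub (hw : ∀ n, Odd (w n)) (i n : ℕ) : Even (pSum w i n - n) := by
  induction n with
  | zero => simp [pSum]
  | succ n ih =>
    have hstep : pSum w i (n + 1) - (n + 1 : ℕ) = (pSum w i n - n) + (w (i + n) - 1) := by
      rw [pSum_succ]
      push_cast
      ring
    rw [hstep]
    exact ih.add ((hw _).sub_odd odd_one)

end pSum

/-- `M n` is the largest sum of `n` consecutive terms of `w`. -/
def IsMaxWindowSum (w M : ℕ → ℤ) : Prop :=
  ∀ n, IsGreatest (Set.range fun i => pSum w i n) (M n)

namespace IsMaxWindowSum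

variable {w M : ℕ → ℤ}

lemma pSum_le (hM : IsMaxWindowSum w M) (i n : ℕ) : pSum w i n ≤ M n :=
  (hM n).2 ⟨i, rfl⟩

lemma exists_pSum_eq (hM : IsMaxWindowSum w M) (n : ℕ) : ∃ i, pSum w i n = M n :=
  (hM n).1

lemma pSum_zero_sub_le (hM : IsMaxWindowSum w M) {i n j : ℕ} (h : i + n = j) :
    pSum w 0 j - pSum w 0 i ≤ M n := by
  rw [← pSum_eq_sub w h]
  exact hM.pSum_le i n

lemma le_of_forall_pSum_le (hM : IsMaxWindowSum w M) {n : ℕ} {c : ℤ}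
    (h : ∀ i, pSum w i n ≤ c) : M n ≤ c := by
  obtain ⟨i, hi⟩ := hM.exists_pSum_eq n
  exact hi ▸ h i

lemma zero (hM : IsMaxWindowSum w M) : M 0 = 0 := by
  obtain ⟨i, hi⟩ := hM.exists_pSum_eq 0
  simpa [pSum] using hi.symm

lemma exists_abs_sub_le (hM : IsMaxWindowSum w M) (n m : ℕ) :
    ∃ i, |M (n + m) - M n| ≤ |pSum w i m| := by
  rcases le_total (M n) (M (n + m)) with hle | hle
  · obtain ⟨i, hi⟩ := hM.exists_pSum_eq (n + m)
    refine ⟨i + n, ?_⟩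
    rw [abs_of_nonneg (sub_nonneg.2 hle)]
    have := hM.pSum_le i n
    rw [pSum_add] at hi
    exact (show _ ≤ _ by linarith).trans (le_abs_self _)
  · obtain ⟨i, hi⟩ := hM.exists_pSum_eq n
    refine ⟨i + n, ?_⟩
    rw [abs_of_nonpos (sub_nonpos.2 hle)]
    have := hM.pSum_le i (n + m)
    rw [pSum_add] at this
    exact (show _ ≤ _ by linarith).trans (neg_le_abs _)

lemma even_sub (hM : IsMaxWindowSum w M) (hw : ∀ n, Odd (w n)) (n : ℕ) : Even (M n - n) := by
  obtain ⟨i, hi⟩ := hM.exists_pSum_eq n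
  exact hi ▸ even_pSum_sub hw i n

lemma succ_eq_add_one_or_sub_one (hM : IsMaxWindowSum w M) (hw : ∀ n, w n = 1 ∨ w n = -1)
    (n : ℕ) : M (n + 1) = M n + 1 ∨ M (n + 1) = M n - 1 := by
  have hodd : ∀ k, Odd (w k) := fun k => by rcases hw k with h | h <;> simp [h]
  have habs : ∀ k, |w k| ≤ 1 := fun k => by rcases hw k with h | h <;> simp [h]
  obtain ⟨i, hi⟩ := hM.exists_abs_sub_le n 1
  have hle := abs_le.1 (hi.trans (abs_pSum_le habs i 1))
  obtain ⟨a, ha⟩ := hM.even_sub hodd n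
  obtain ⟨b, hb⟩ := hM.even_sub hodd (n + 1)
  push_cast at hb hle
  omega

lemma abs_succ_sub (hM : IsMaxWindowSum w M) (hw : ∀ n, w n = 1 ∨ w n = -1) (n : ℕ) :
    |M (n + 1) - M n| = 1 := by
  rcases hM.succ_eq_add_one_or_sub_one hw n with h | h <;> simp [h]

end IsMaxWindowSum

/-! ### The Rudin–Shapiro sequence -/

/-- The recursion and initial value defining the Rudin–Shapiro sequence. -/
structure IsRudinShapiro (r : ℕ → ℤ) : Prop where
  apply_zero : r 0 = 1
  apply_two_mul : ∀ n, r (2 * n) = r n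
  apply_two_mul_add_one : ∀ n, r (2 * n + 1) = (-1) ^ n * r n

/-- The odd-indexed subsequence `n ↦ w(2n + 1)`. For the Rudin–Shapiro sequence it is the twist
`(-1)^n r(n)`, whose sign decides how much a window gains when it is dilated by `4`. -/
def oddPart (w : ℕ → ℤ) (n : ℕ) : ℤ := w (2 * n + 1)

/-- Some optimal window `[p + 1, p + n]` of length `n` has `oddPart r` equal to `-1` at `p` and to
`1` at `p + n`. These are the windows whose dilate `[4p + 3, 4(p + n) + 2]` has the largest sum
conceivable, `2 M(n) + 2`. -/
def HasAnchoredMax (r M : ℕ → ℤ) (n : ℕ) : Prop :=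
  ∃ p, pSum r (p + 1) n = M n ∧ oddPart r p = -1 ∧ oddPart r (p + n) = 1

lemma IsMaxWindowSum.hasAnchoredMax {r M : ℕ → ℤ} (hM : IsMaxWindowSum r M) {p n : ℕ}
    (hle : M n ≤ pSum r (p + 1) n) (hp : oddPart r p = -1) (hpn : oddPart r (p + n) = 1) :
    HasAnchoredMax r M n :=
  ⟨p, (hM.pSum_le _ _).antisymm hle, hp, hpn⟩

lemma exists_eq_four_mul_add (n : ℕ) :
    ∃ q, n = 4 * q ∨ n = 4 * q + 1 ∨ n = 4 * q + 2 ∨ n = 4 * q + 3 :=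
  ⟨n / 4, by omega⟩

namespace IsRudinShapiro

variable {r M : ℕ → ℤ}

section

variable (hr : IsRudinShapiro r)
include hr

lemma eq_one_or_eq_neg_one (n : ℕ) : r n = 1 ∨ r n = -1 := by
  induction n using Nat.strong_induction_on with
  | _ n ih =>
    rcases Nat.even_or_odd' n with ⟨k, rfl | rfl⟩
    · rcases Nat.eq_zero_or_pos k with rfl | hk
      · exact .inl hr.apply_zero
      · rw [hr.apply_two_mul]
        exact ih k (by omega)
    · rw [hr.apply_two_mul_add_one]
      rcases ih k (by omega) with h | h <;> rcases neg_one_pow_eq_or ℤ k with h' | h' <;>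
        simp [h, h']

lemma abs_apply_le_one (n : ℕ) : |r n| ≤ 1 := by
  rcases hr.eq_one_or_eq_neg_one n with h | h <;> simp [h]

lemma apply_four_mul (q : ℕ) : r (4 * q) = r q := by
  rw [show 4 * q = 2 * (2 * q) by ring, hr.apply_two_mul, hr.apply_two_mul]

lemma apply_four_mul_add_one (q : ℕ) : r (4 * q + 1) = r q := by
  rw [show 4 * q + 1 = 2 * (2 * q) + 1 by ring, hr.apply_two_mul_add_one, hr.apply_two_mul,
    (even_two_mul q).neg_one_pow, one_mul]

lemma apply_four_mul_add_two (q : ℕ) : r (4 * q + 2) = oddPart r q := by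
  rw [show 4 * q + 2 = 2 * (2 * q + 1) by ring, hr.apply_two_mul, oddPart]

lemma apply_four_mul_add_three (q : ℕ) : r (4 * q + 3) = -oddPart r q := by
  rw [show 4 * q + 3 = 2 * (2 * q + 1) + 1 by ring, hr.apply_two_mul_add_one, oddPart,
    (odd_two_mul_add_one q).neg_one_pow, neg_one_mul]

lemma oddPart_even {n : ℕ} (hn : Even n) : oddPart r n = r n := by
  rw [oddPart, hr.apply_two_mul_add_one, hn.neg_one_pow, one_mul]

lemma oddPart_odd {n : ℕ} (hn : Odd n) : oddPart r n = -r n := by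
  rw [oddPart, hr.apply_two_mul_add_one, hn.neg_one_pow, neg_one_mul]

lemma abs_oddPart_le_one (n : ℕ) : |oddPart r n| ≤ 1 :=
  hr.abs_apply_le_one _

lemma oddPart_four_mul (q : ℕ) : oddPart r (4 * q) = r q := by
  rw [hr.oddPart_even ⟨2 * q, by ring⟩, hr.apply_four_mul]

lemma oddPart_four_mul_add_one (q : ℕ) : oddPart r (4 * q + 1) = -r q := by
  rw [hr.oddPart_odd ⟨2 * q, by ring⟩, hr.apply_four_mul_add_one]

lemma oddPart_four_mul_add_two (q : ℕ) : oddPart r (4 * q + 2) = oddPart r q := by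
  rw [hr.oddPart_even ⟨2 * q + 1, by ring⟩, hr.apply_four_mul_add_two]

lemma oddPart_four_mul_add_three (q : ℕ) : oddPart r (4 * q + 3) = oddPart r q := by
  rw [hr.oddPart_odd ⟨2 * q + 1, by ring⟩, hr.apply_four_mul_add_three, neg_neg]

lemma abs_pSum_zero_succ_sub_le_one (q : ℕ) : |pSum r 0 (q + 1) - pSum r 0 q| ≤ 1 := by
  rw [pSum_succ, add_sub_cancel_left, zero_add]
  exact hr.abs_apply_le_one q

lemma pSum_zero_four_mul (q : ℕ) : pSum r 0 (4 * q) = 2 * pSum r 0 q := by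
  induction q with
  | zero => simp [pSum]
  | succ q ih =>
    rw [show 4 * (q + 1) = 4 * q + 3 + 1 by ring]
    simp only [pSum_succ, ih, zero_add, hr.apply_four_mul, hr.apply_four_mul_add_one,
      hr.apply_four_mul_add_two, hr.apply_four_mul_add_three]
    ring

lemma pSum_zero_four_mul_add_one (q : ℕ) :
    pSum r 0 (4 * q + 1) = pSum r 0 q + pSum r 0 (q + 1) := by
  simp only [pSum_succ, zero_add, hr.pSum_zero_four_mul, hr.apply_four_mul]
  ring

lemma pSum_zero_four_mul_add_two (q : ℕ) : pSum r 0 (4 * q + 2) = 2 * pSum r 0 (q + 1) := by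
  simp only [pSum_succ, zero_add, hr.pSum_zero_four_mul, hr.apply_four_mul,
    hr.apply_four_mul_add_one]
  ring

lemma pSum_zero_four_mul_add_three (q : ℕ) :
    pSum r 0 (4 * q + 3) = 2 * pSum r 0 (q + 1) + oddPart r q := by
  rw [pSum_succ, hr.pSum_zero_four_mul_add_two, zero_add, hr.apply_four_mul_add_two]

lemma pSum_four_mul_add_three (p n : ℕ) :
    pSum r (4 * p + 3) (4 * n) =
      2 * pSum r (p + 1) n + (oddPart r (p + n) - oddPart r p) := by
  rw [pSum_eq_sub r (show 4 * p + 3 + 4 * n = 4 * (p + n) + 3 by ring),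
    hr.pSum_zero_four_mul_add_three, hr.pSum_zero_four_mul_add_three,
    pSum_eq_sub r (show p + 1 + n = p + n + 1 by ring)]
  ring

/-! ### Square-root growth of window sums -/

lemma abs_pSum_le_two_mul_add (i n : ℕ) :
    |pSum r i n| ≤ 2 * |pSum r (i / 4) (n / 4)| + 9 := by
  set q := i / 4
  set m := n / 4
  obtain ⟨s, hs⟩ : ∃ s, i = 4 * q + s := ⟨i % 4, by omega⟩
  obtain ⟨t, ht⟩ : ∃ t, i + n = 4 * (q + m) + t := ⟨i % 4 + n % 4, by omega⟩
  have hpre := abs_pSum_le hr.abs_apply_le_one (4 * q) s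
  have hpost := abs_pSum_le hr.abs_apply_le_one (4 * (q + m)) t
  have hsum : pSum r i n = 2 * pSum r q m - pSum r (4 * q) s + pSum r (4 * (q + m)) t := by
    rw [pSum_eq_sub r ht, pSum_eq_sub r hs.symm, pSum_eq_sub r (rfl : q + m = _),
      pSum_eq_sub r (rfl : 4 * (q + m) + t = _), hr.pSum_zero_four_mul, hr.pSum_zero_four_mul]
    ring
  have hst : s + t ≤ 9 := by omega
  calc |pSum r i n| ≤ |2 * pSum r q m| + |pSum r (4 * q) s| + |pSum r (4 * (q + m)) t| := by
        rw [hsum]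
        exact (abs_add_le _ _).trans (add_le_add_left (abs_sub _ _) _)
    _ ≤ 2 * |pSum r q m| + 9 := by
        rw [abs_mul, abs_two]
        linarith [(Nat.cast_le (α := ℤ)).2 hst, Nat.cast_add (R := ℤ) s t]

/-- The summand `9` absorbs the error term of `abs_pSum_le_two_mul_add` in the induction. -/
lemma abs_pSum_add_le_sqrt {n : ℕ} (hn : 1 ≤ n) (i : ℕ) :
    |(pSum r i n : ℝ)| + 9 ≤ 18 * √n := by
  induction n using Nat.strong_induction_on generalizing i with
  | _ n ih =>
    have hrec : |(pSum r i n : ℝ)| ≤ 2 * |(pSum r (i / 4) (n / 4) : ℝ)| + 9 := by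
      exact_mod_cast hr.abs_pSum_le_two_mul_add i n
    have hone : (1 : ℝ) ≤ √n := Real.one_le_sqrt.2 (by exact_mod_cast hn)
    rcases Nat.eq_zero_or_pos (n / 4) with hm | hm
    · simp only [hm, pSum, Finset.range_zero, Finset.sum_empty, Int.cast_zero, abs_zero] at hrec ⊢
      linarith
    · have hsqrt : 2 * √(n / 4 : ℕ) ≤ √n := by
        refine Real.le_sqrt_of_sq_le ?_
        rw [mul_pow, Real.sq_sqrt (Nat.cast_nonneg _)]
        exact_mod_cast (by omega : 2 ^ 2 * (n / 4) ≤ n)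
      linarith [ih (n / 4) (by omega) hm (i / 4)]

lemma abs_pSum_le_sqrt (i n : ℕ) : |(pSum r i n : ℝ)| ≤ 18 * √n := by
  rcases Nat.eq_zero_or_pos n with rfl | hn
  · simp [pSum]
  · linarith [hr.abs_pSum_add_le_sqrt hn i]

end

/-! ### The recursion for `M` -/

section

variable (hr : IsRudinShapiro r) (hM : IsMaxWindowSum r M)
include hr hM

lemma max_four_mul_le (n : ℕ) : M (4 * n) ≤ 2 * M n + 2 := by
  refine hM.le_of_forall_pSum_le fun i => ?_
  obtain ⟨q, hq⟩ := exists_eq_four_mul_add i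
  have hleft := hM.pSum_zero_sub_le (show q + n = q + n from rfl)
  have hright := hM.pSum_zero_sub_le (show q + 1 + n = q + n + 1 by ring)
  rcases hq with rfl | rfl | rfl | rfl
  · rw [pSum_eq_sub r (show 4 * q + 4 * n = 4 * (q + n) by ring),
      hr.pSum_zero_four_mul, hr.pSum_zero_four_mul]
    linarith
  · rw [pSum_eq_sub r (show 4 * q + 1 + 4 * n = 4 * (q + n) + 1 by ring),
      hr.pSum_zero_four_mul_add_one, hr.pSum_zero_four_mul_add_one]
    linarith
  · rw [pSum_eq_sub r (show 4 * q + 2 + 4 * n = 4 * (q + n) + 2 by ring),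
      hr.pSum_zero_four_mul_add_two, hr.pSum_zero_four_mul_add_two]
    linarith
  · rw [hr.pSum_four_mul_add_three]
    linarith [hM.pSum_le (q + 1) n, abs_le.1 (hr.abs_oddPart_le_one q),
      abs_le.1 (hr.abs_oddPart_le_one (q + n))]

lemma max_four_mul_add_one_le (n : ℕ) : M (4 * n + 1) ≤ 2 * M n + 1 := by
  refine hM.le_of_forall_pSum_le fun i => ?_
  obtain ⟨q, hq⟩ := exists_eq_four_mul_add i
  have hleft := hM.pSum_zero_sub_le (show q + n = q + n from rfl)
  have hright := hM.pSum_zero_sub_le (show q + 1 + n = q + n + 1 by ring)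
  have hfirst := abs_le.1 (hr.abs_pSum_zero_succ_sub_le_one q)
  rcases hq with rfl | rfl | rfl | rfl
  · rw [pSum_eq_sub r (show 4 * q + (4 * n + 1) = 4 * (q + n) + 1 by ring),
      hr.pSum_zero_four_mul, hr.pSum_zero_four_mul_add_one]
    linarith
  · rw [pSum_eq_sub r (show 4 * q + 1 + (4 * n + 1) = 4 * (q + n) + 2 by ring),
      hr.pSum_zero_four_mul_add_one, hr.pSum_zero_four_mul_add_two]
    linarith
  · rw [pSum_eq_sub r (show 4 * q + 2 + (4 * n + 1) = 4 * (q + n) + 3 by ring),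
      hr.pSum_zero_four_mul_add_two, hr.pSum_zero_four_mul_add_three]
    linarith [abs_le.1 (hr.abs_oddPart_le_one (q + n))]
  · rw [pSum_eq_sub r (show 4 * q + 3 + (4 * n + 1) = 4 * (q + n + 1) by ring),
      hr.pSum_zero_four_mul_add_three, hr.pSum_zero_four_mul]
    linarith [abs_le.1 (hr.abs_oddPart_le_one q)]

lemma max_four_mul_add_two_le (n : ℕ) : M (4 * n + 2) ≤ M n + M (n + 1) + 1 := by
  refine hM.le_of_forall_pSum_le fun i => ?_
  obtain ⟨q, hq⟩ := exists_eq_four_mul_add i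
  have hlong := hM.pSum_zero_sub_le (show q + (n + 1) = q + n + 1 by ring)
  have hlong' := hM.pSum_zero_sub_le (show q + 1 + (n + 1) = q + n + 1 + 1 by ring)
  have hshort := hM.pSum_zero_sub_le (show q + 1 + n = q + n + 1 by ring)
  have hstep := hM.succ_eq_add_one_or_sub_one hr.eq_one_or_eq_neg_one n
  rcases hq with rfl | rfl | rfl | rfl
  · rw [pSum_eq_sub r (show 4 * q + (4 * n + 2) = 4 * (q + n) + 2 by ring),
      hr.pSum_zero_four_mul, hr.pSum_zero_four_mul_add_two]
    omega
  · rw [pSum_eq_sub r (show 4 * q + 1 + (4 * n + 2) = 4 * (q + n) + 3 by ring),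
      hr.pSum_zero_four_mul_add_one, hr.pSum_zero_four_mul_add_three]
    linarith [abs_le.1 (hr.abs_oddPart_le_one (q + n))]
  · rw [pSum_eq_sub r (show 4 * q + 2 + (4 * n + 2) = 4 * (q + n + 1) by ring),
      hr.pSum_zero_four_mul_add_two, hr.pSum_zero_four_mul]
    omega
  · rw [pSum_eq_sub r (show 4 * q + 3 + (4 * n + 2) = 4 * (q + n + 1) + 1 by ring),
      hr.pSum_zero_four_mul_add_three, hr.pSum_zero_four_mul_add_one]
    linarith [abs_le.1 (hr.abs_oddPart_le_one q)]

lemma max_four_mul_add_three_le (n : ℕ) : M (4 * n + 3) ≤ 2 * M (n + 1) + 1 := by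
  refine hM.le_of_forall_pSum_le fun i => ?_
  obtain ⟨q, hq⟩ := exists_eq_four_mul_add i
  have hleft := hM.pSum_zero_sub_le (show q + (n + 1) = q + n + 1 by ring)
  have hright := hM.pSum_zero_sub_le (show q + 1 + (n + 1) = q + n + 1 + 1 by ring)
  have hfirst := abs_le.1 (hr.abs_pSum_zero_succ_sub_le_one q)
  rcases hq with rfl | rfl | rfl | rfl
  · rw [pSum_eq_sub r (show 4 * q + (4 * n + 3) = 4 * (q + n) + 3 by ring),
      hr.pSum_zero_four_mul, hr.pSum_zero_four_mul_add_three]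
    linarith [abs_le.1 (hr.abs_oddPart_le_one (q + n))]
  · rw [pSum_eq_sub r (show 4 * q + 1 + (4 * n + 3) = 4 * (q + n + 1) by ring),
      hr.pSum_zero_four_mul_add_one, hr.pSum_zero_four_mul]
    linarith
  · rw [pSum_eq_sub r (show 4 * q + 2 + (4 * n + 3) = 4 * (q + n + 1) + 1 by ring),
      hr.pSum_zero_four_mul_add_two, hr.pSum_zero_four_mul_add_one]
    linarith
  · rw [pSum_eq_sub r (show 4 * q + 3 + (4 * n + 3) = 4 * (q + n + 1) + 2 by ring),
      hr.pSum_zero_four_mul_add_three, hr.pSum_zero_four_mul_add_two]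
    linarith [abs_le.1 (hr.abs_oddPart_le_one q)]

lemma max_one : M 1 = 1 := by
  refine le_antisymm (hM.le_of_forall_pSum_le fun i => ?_) ?_
  · exact (le_abs_self _).trans (abs_pSum_le hr.abs_apply_le_one i 1)
  · simpa [pSum, hr.apply_zero] using hM.pSum_le 0 1

lemma hasAnchoredMax_one : HasAnchoredMax r M 1 := by
  have h1 : r 1 = 1 := by simpa [hr.apply_zero] using hr.apply_four_mul_add_one 0
  have h2 : r 2 = 1 := by simpa [h1] using hr.apply_two_mul 1
  have h3 : r 3 = -1 := by simpa [h1] using hr.apply_two_mul_add_one 1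
  refine hM.hasAnchoredMax (p := 7) ?_ ?_ ?_
  · have h8 : r 8 = 1 := (hr.apply_four_mul 2).trans h2
    simp [hr.max_one hM, pSum, h8]
  · exact (hr.oddPart_four_mul_add_three 1).trans h3
  · exact (hr.oddPart_four_mul 2).trans h2

lemma hasAnchoredMax_four_mul {n : ℕ} (h : HasAnchoredMax r M n) :
    HasAnchoredMax r M (4 * n) := by
  obtain ⟨p, hp, hstart, hend⟩ := h
  refine hM.hasAnchoredMax (p := 4 * p + 2) ?_ ?_ ?_
  · rw [hr.pSum_four_mul_add_three, hp, hstart, hend]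
    exact hr.max_four_mul_le hM n
  · rw [hr.oddPart_four_mul_add_two, hstart]
  · rw [show 4 * p + 2 + 4 * n = 4 * (p + n) + 2 by ring, hr.oddPart_four_mul_add_two, hend]

lemma hasAnchoredMax_four_mul_add_one {n : ℕ} (h : HasAnchoredMax r M n) :
    HasAnchoredMax r M (4 * n + 1) := by
  obtain ⟨p, hp, hstart, hend⟩ := h
  refine hM.hasAnchoredMax (p := 4 * p + 2) ?_ ?_ ?_
  · rw [pSum_eq_sub r (show p + 1 + n = p + n + 1 by ring)] at hp
    rw [pSum_eq_sub r (show 4 * p + 2 + 1 + (4 * n + 1) = 4 * (p + n + 1) by ring),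
      hr.pSum_zero_four_mul, hr.pSum_zero_four_mul_add_three]
    linarith [hr.max_four_mul_add_one_le hM n]
  · rw [hr.oddPart_four_mul_add_two, hstart]
  · rw [show 4 * p + 2 + (4 * n + 1) = 4 * (p + n) + 3 by ring, hr.oddPart_four_mul_add_three,
      hend]

lemma hasAnchoredMax_four_mul_add_two_of_lt {n : ℕ} (h : HasAnchoredMax r M (n + 1))
    (hlt : M n < M (n + 1)) : HasAnchoredMax r M (4 * n + 2) := by
  obtain ⟨p, hp, hstart, hend⟩ := h
  have hle := hr.max_four_mul_add_two_le hM n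
  have hlast := pSum_succ r 0 (p + n + 1)
  rw [pSum_eq_sub r (show p + 1 + (n + 1) = p + n + 1 + 1 by ring)] at hp
  rw [zero_add] at hlast
  rcases hr.eq_one_or_eq_neg_one (p + n + 1) with hrp | hrp
  · refine hM.hasAnchoredMax (p := 4 * p + 2) ?_ ?_ ?_
    · rw [pSum_eq_sub r (show 4 * p + 2 + 1 + (4 * n + 2) = 4 * (p + n + 1) + 1 by ring),
        hr.pSum_zero_four_mul_add_one, hr.pSum_zero_four_mul_add_three]
      linarith
    · rw [hr.oddPart_four_mul_add_two, hstart]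
    · rw [show 4 * p + 2 + (4 * n + 2) = 4 * (p + n + 1) by ring, hr.oddPart_four_mul, hrp]
  · refine hM.hasAnchoredMax (p := 4 * p + 3) ?_ ?_ ?_
    · rw [pSum_eq_sub r (show 4 * p + 3 + 1 + (4 * n + 2) = 4 * (p + n + 1) + 2 by ring),
        hr.pSum_zero_four_mul_add_two, show 4 * p + 3 + 1 = 4 * (p + 1) by ring,
        hr.pSum_zero_four_mul]
      linarith
    · rw [hr.oddPart_four_mul_add_three, hstart]
    · rw [show 4 * p + 3 + (4 * n + 2) = 4 * (p + n + 1) + 1 by ring,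
        hr.oddPart_four_mul_add_one, hrp, neg_neg]

lemma hasAnchoredMax_four_mul_add_two_of_gt {n : ℕ} (h : HasAnchoredMax r M n)
    (hgt : M (n + 1) < M n) : HasAnchoredMax r M (4 * n + 2) := by
  obtain ⟨p, hp, hstart, hend⟩ := h
  have hle := hr.max_four_mul_add_two_le hM n
  have hlong := hM.pSum_zero_sub_le (show p + (n + 1) = p + n + 1 by ring)
  have hfirst := pSum_succ r 0 p
  rw [pSum_eq_sub r (show p + 1 + n = p + n + 1 by ring)] at hp
  rw [zero_add] at hfirst
  have hrp : r p = -1 := (hr.eq_one_or_eq_neg_one p).resolve_left fun hrp => by linarith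
  refine hM.hasAnchoredMax (p := 4 * p) ?_ ?_ ?_
  · rw [pSum_eq_sub r (show 4 * p + 1 + (4 * n + 2) = 4 * (p + n) + 3 by ring),
      hr.pSum_zero_four_mul_add_one, hr.pSum_zero_four_mul_add_three]
    linarith
  · rw [hr.oddPart_four_mul, hrp]
  · rw [show 4 * p + (4 * n + 2) = 4 * (p + n) + 2 by ring, hr.oddPart_four_mul_add_two, hend]

lemma hasAnchoredMax_four_mul_add_three {n : ℕ} (h : HasAnchoredMax r M (n + 1)) :
    HasAnchoredMax r M (4 * n + 3) := by
  obtain ⟨p, hp, hstart, hend⟩ := h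
  refine hM.hasAnchoredMax (p := 4 * p + 3) ?_ ?_ ?_
  · rw [pSum_eq_sub r (show p + 1 + (n + 1) = p + (n + 1) + 1 by ring)] at hp
    rw [pSum_eq_sub r (show 4 * p + 3 + 1 + (4 * n + 3) = 4 * (p + (n + 1)) + 3 by ring),
      hr.pSum_zero_four_mul_add_three, show 4 * p + 3 + 1 = 4 * (p + 1) by ring,
      hr.pSum_zero_four_mul]
    linarith [hr.max_four_mul_add_three_le hM n]
  · rw [hr.oddPart_four_mul_add_three, hstart]
  · rw [show 4 * p + 3 + (4 * n + 3) = 4 * (p + (n + 1)) + 2 by ring,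
      hr.oddPart_four_mul_add_two, hend]

lemma hasAnchoredMax {n : ℕ} (hn : n ≠ 0) : HasAnchoredMax r M n := by
  induction n using Nat.strong_induction_on with
  | _ N ih =>
    obtain ⟨n, hN⟩ := exists_eq_four_mul_add N
    rcases hN with rfl | rfl | rfl | rfl
    · exact hr.hasAnchoredMax_four_mul hM (ih n (by omega) (by omega))
    · rcases eq_or_ne n 0 with rfl | hn0
      · exact hr.hasAnchoredMax_one hM
      · exact hr.hasAnchoredMax_four_mul_add_one hM (ih n (by omega) hn0)
    · rcases hM.succ_eq_add_one_or_sub_one hr.eq_one_or_eq_neg_one n with hstep | hstep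
      · exact hr.hasAnchoredMax_four_mul_add_two_of_lt hM (ih (n + 1) (by omega) (by omega))
          (by omega)
      · refine hr.hasAnchoredMax_four_mul_add_two_of_gt hM (ih n (by omega) ?_) (by omega)
        rintro rfl
        rw [zero_add, hr.max_one hM, hM.zero] at hstep
        omega
    · exact hr.hasAnchoredMax_four_mul_add_three hM (ih (n + 1) (by omega) (by omega))

theorem max_four_mul {n : ℕ} (hn : n ≠ 0) : M (4 * n) = 2 * M n + 2 := by
  obtain ⟨p, hp, hstart, hend⟩ := hr.hasAnchoredMax hM hn
  have hdilate := hr.pSum_four_mul_add_three p n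
  rw [hp, hstart, hend] at hdilate
  linarith [hr.max_four_mul_le hM n, hM.pSum_le (4 * p + 3) (4 * n)]

lemma abs_max_le_sqrt (n : ℕ) : |(M n : ℝ)| ≤ 18 * √n := by
  obtain ⟨i, hi⟩ := hM.exists_pSum_eq n
  exact hi ▸ hr.abs_pSum_le_sqrt i n

lemma abs_max_add_sub_le_sqrt (n m : ℕ) : |(M (n + m) - M n : ℝ)| ≤ 18 * √m := by
  obtain ⟨i, hi⟩ := hM.exists_abs_sub_le n m
  refine le_trans ?_ (hr.abs_pSum_le_sqrt i m)
  exact_mod_cast hi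

end

end IsRudinShapiro

/-! ### The scaling limit -/

/-- `g x` is the limit of `a(⌊4^k x⌋) / 2^k`. For `a = M` this is `√x λ(x)`. -/
def IsScalingLimit (a : ℕ → ℝ) (g : ℝ → ℝ) : Prop :=
  ∀ x, 0 < x → Tendsto (fun k : ℕ => a ⌊(4 : ℝ) ^ k * x⌋₊ / 2 ^ k) atTop (𝓝 (g x))

lemma sqrt_four_pow (k : ℕ) : √((4 : ℝ) ^ k) = 2 ^ k := by
  rw [show (4 : ℝ) ^ k = (2 ^ k) ^ 2 by rw [← pow_mul, pow_mul']; norm_num]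
  exact Real.sqrt_sq (by positivity)

lemma tendsto_const_div_two_pow (c : ℝ) : Tendsto (fun k : ℕ => c / 2 ^ k) atTop (𝓝 0) :=
  (tendsto_pow_atTop_atTop_of_one_lt one_lt_two).const_div_atTop c

lemma isScalingLimit_sqrt_mul {a : ℕ → ℝ} {f : ℝ → ℝ} {c : ℝ}
    (hf : ∀ x, 0 < x →
      Tendsto (fun k : ℕ => (a ⌊(4 : ℝ) ^ k * x⌋₊ + c) / √((4 : ℝ) ^ k * x)) atTop (𝓝 (f x))) :
    IsScalingLimit a fun x => √x * f x := by
  intro x hx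
  have hlim := ((hf x hx).const_mul √x).sub (tendsto_const_div_two_pow c)
  rw [sub_zero] at hlim
  refine hlim.congr fun k => ?_
  have := Real.sqrt_pos.2 hx
  rw [Real.sqrt_mul (by positivity), sqrt_four_pow]
  field_simp
  ring

namespace IsScalingLimit

variable {a : ℕ → ℝ} {g : ℝ → ℝ} {K : ℝ}

lemma abs_le (hg : IsScalingLimit a g) (ha : ∀ n, |a n| ≤ K * √n) {x : ℝ} (hx : 0 < x) :
    |g x| ≤ K * √x := by
  have hK : 0 ≤ K := by simpa using (abs_nonneg _).trans (ha 1)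
  refine le_of_tendsto' (hg x hx).abs fun k => ?_
  rw [abs_div, abs_of_pos (by positivity : (0 : ℝ) < 2 ^ k), div_le_iff₀ (by positivity)]
  calc |a ⌊(4 : ℝ) ^ k * x⌋₊| ≤ K * √(⌊(4 : ℝ) ^ k * x⌋₊ : ℝ) := ha _
    _ ≤ K * √(4 ^ k * x) := by
        gcongr
        exact Nat.floor_le (by positivity)
    _ = K * √x * 2 ^ k := by
        rw [Real.sqrt_mul (by positivity), sqrt_four_pow]
        ring

lemma abs_sub_le_of_le (hg : IsScalingLimit a g)
    (ha : ∀ n m, |a (n + m) - a n| ≤ K * √m) {x y : ℝ} (hx : 0 < x) (hxy : x ≤ y) :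
    |g y - g x| ≤ K * √(y - x) := by
  have hK : 0 ≤ K := by simpa using (abs_nonneg _).trans (ha 0 1)
  have hbound : Tendsto (fun k : ℕ => K * √(y - x + 1 / (4 : ℝ) ^ k)) atTop
      (𝓝 (K * √(y - x))) := by
    have hpow : Tendsto (fun k : ℕ => 1 / (4 : ℝ) ^ k) atTop (𝓝 0) :=
      (tendsto_pow_atTop_atTop_of_one_lt (by norm_num)).const_div_atTop 1
    simpa using ((hpow.const_add (y - x)).sqrt).const_mul K
  refine le_of_tendsto_of_tendsto' ((hg y (hx.trans_le hxy)).sub (hg x hx)).abs hbound fun k => ?_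
  obtain ⟨m, hm⟩ := Nat.exists_eq_add_of_le
    (Nat.floor_mono (by gcongr : (4 : ℝ) ^ k * x ≤ 4 ^ k * y))
  have hm_le : (m : ℝ) ≤ 4 ^ k * (y - x + 1 / 4 ^ k) := by
    have hy := Nat.floor_le (by positivity [hx.trans_le hxy] : 0 ≤ (4 : ℝ) ^ k * y)
    have hx := Nat.lt_floor_add_one ((4 : ℝ) ^ k * x)
    rw [hm, Nat.cast_add] at hy
    rw [mul_add, mul_one_div_cancel (by positivity)]
    linarith
  rw [← sub_div, abs_div, abs_of_pos (by positivity : (0 : ℝ) < 2 ^ k),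
    div_le_iff₀ (by positivity), hm]
  calc |a (⌊(4 : ℝ) ^ k * x⌋₊ + m) - a ⌊(4 : ℝ) ^ k * x⌋₊| ≤ K * √m := ha _ m
    _ ≤ K * √(4 ^ k * (y - x + 1 / 4 ^ k)) := by gcongr
    _ = K * √(y - x + 1 / 4 ^ k) * 2 ^ k := by
        rw [Real.sqrt_mul (by positivity), sqrt_four_pow]
        ring

lemma abs_sub_le (hg : IsScalingLimit a g) (ha : ∀ n m, |a (n + m) - a n| ≤ K * √m) {x y : ℝ}
    (hx : 0 < x) (hy : 0 < y) : |g y - g x| ≤ K * √|y - x| := by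
  rcases le_total x y with hxy | hyx
  · rw [abs_of_nonneg (sub_nonneg.2 hxy)]
    exact hg.abs_sub_le_of_le ha hx hxy
  · rw [abs_sub_comm, abs_sub_comm y, abs_of_nonneg (sub_nonneg.2 hyx)]
    exact hg.abs_sub_le_of_le ha hy hyx

variable {b : ℝ}

lemma apply_div_four_pow (hg : IsScalingLimit a g) (ha : ∀ n ≠ 0, a (4 * n) = 2 * a n + b)
    {n : ℕ} (hn : n ≠ 0) (j : ℕ) : g (n / 4 ^ j) = (a n + b) / 2 ^ j := by
  have hpow : ∀ k, a (4 ^ k * n) + b = 2 ^ k * (a n + b) := fun k => by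
    induction k with
    | zero => simp
    | succ k ih =>
      rw [pow_succ', mul_assoc, ha _ (by positivity), pow_succ', mul_assoc, ← ih]
      ring
  have hlim := (hg (n / 4 ^ j) (by positivity)).comp (tendsto_add_atTop_nat j)
  refine tendsto_nhds_unique hlim ?_
  have hval := (tendsto_const_div_two_pow (b / 2 ^ j)).const_sub ((a n + b) / 2 ^ j)
  rw [sub_zero] at hval
  refine hval.congr fun k => ?_
  have hfloor : (4 : ℝ) ^ (k + j) * (n / 4 ^ j) = (4 ^ k * n : ℕ) := by
    push_cast
    field_simp
    ring
  rw [Function.comp_apply, hfloor, Nat.floor_natCast, eq_sub_of_add_eq (hpow k)]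
  field_simp
  ring

end IsScalingLimit

lemma exists_adjacent_div_four_pow_mem_Icc {u δ : ℝ} (hu : 0 < u) (hδ : 0 < δ) (hδ1 : δ ≤ 1) :
    ∃ n j : ℕ, n ≠ 0 ∧ u ≤ n / 4 ^ j ∧ ((n + 1 : ℕ) : ℝ) / 4 ^ j ≤ u + δ ∧
      δ / 8 ≤ 1 / 4 ^ j := by
  obtain ⟨i, hlt, hle⟩ := exists_nat_pow_near_of_lt_one (x := δ / 2) (y := (1 / 4 : ℝ))
    (by linarith) (by linarith) (by norm_num) (by norm_num)
  have hpos : (0 : ℝ) < 4 ^ (i + 1) := by positivity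
  have hceil := Nat.ceil_lt_add_one (by positivity : 0 ≤ u * 4 ^ (i + 1))
  rw [div_pow, one_pow, div_lt_iff₀ hpos] at hlt
  refine ⟨⌈u * 4 ^ (i + 1)⌉₊, i + 1, ?_, ?_, ?_, ?_⟩
  · exact (Nat.ceil_pos.2 (by positivity)).ne'
  · rw [le_div_iff₀ hpos]
    exact Nat.le_ceil _
  · rw [div_le_iff₀ hpos, Nat.cast_succ]
    linarith
  · rw [div_pow, one_pow] at hle
    rw [pow_succ, ← div_div, le_div_iff₀ four_pos]
    linarith

lemma IsScalingLimit.exists_le_abs_sub {a : ℕ → ℝ} {g : ℝ → ℝ} {b : ℝ}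
    (hg : IsScalingLimit a g) (ha : ∀ n ≠ 0, a (4 * n) = 2 * a n + b)
    (hstep : ∀ n, 1 ≤ |a (n + 1) - a n|) {u δ : ℝ} (hu : 0 < u) (hδ : 0 < δ) (hδ1 : δ ≤ 1) :
    ∃ x ∈ Set.Icc u (u + δ), ∃ y ∈ Set.Icc u (u + δ), 1 / 3 * √δ ≤ |g y - g x| := by
  obtain ⟨n, j, hn, hux, hyu, hj⟩ := exists_adjacent_div_four_pow_mem_Icc hu hδ hδ1
  have hxy : (n : ℝ) / 4 ^ j ≤ (n + 1 : ℕ) / 4 ^ j := by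
    gcongr
    exact n.le_succ
  refine ⟨n / 4 ^ j, ⟨hux, hxy.trans hyu⟩, (n + 1 : ℕ) / 4 ^ j, ⟨hux.trans hxy, hyu⟩, ?_⟩
  calc 1 / 3 * √δ ≤ √(1 / 4 ^ j) := by
        refine Real.le_sqrt_of_sq_le ?_
        rw [mul_pow, Real.sq_sqrt hδ.le]
        linarith
    _ = 1 / 2 ^ j := by rw [Real.sqrt_div' _ (by positivity), Real.sqrt_one, sqrt_four_pow]
    _ ≤ |a (n + 1) - a n| / 2 ^ j := by
        gcongr
        exact hstep n
    _ = |g ((n + 1 : ℕ) / 4 ^ j) - g (n / 4 ^ j)| := by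
        rw [hg.apply_div_four_pow ha hn, hg.apply_div_four_pow ha n.succ_ne_zero, ← sub_div,
          add_sub_add_right_eq_sub, abs_div, abs_of_pos (by positivity : (0 : ℝ) < 2 ^ j)]

/-! ### Dividing out the square root -/

section DivSqrt

variable {f : ℝ → ℝ} {K α x y : ℝ}

lemma abs_sqrt_sub_sqrt_mul_add (hx : 0 ≤ x) (hy : 0 ≤ y) : |√y - √x| * (√y + √x) = |y - x| := by
  rw [← abs_of_nonneg (by positivity : 0 ≤ √y + √x), ← abs_mul, mul_comm, ← sq_sub_sq,
    Real.sq_sqrt hy, Real.sq_sqrt hx]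

lemma abs_sqrt_sub_sqrt_le (hx : 0 ≤ x) (hy : 0 ≤ y) : |√y - √x| ≤ √|y - x| := by
  refine Real.le_sqrt_of_sq_le ?_
  rw [← abs_sqrt_sub_sqrt_mul_add hx hy, sq]
  gcongr
  rw [abs_sub_le_iff]
  constructor <;> linarith [Real.sqrt_nonneg x, Real.sqrt_nonneg y]

lemma abs_sqrt_sub_sqrt_mul_sqrt_le (hα : 0 ≤ α) (hx : α ≤ x) (hy : 0 ≤ y) :
    |√y - √x| * √α ≤ |y - x| := by
  rw [← abs_sqrt_sub_sqrt_mul_add (hα.trans hx) hy]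
  gcongr
  linarith [Real.sqrt_le_sqrt hx, Real.sqrt_nonneg y]

lemma abs_sqrt_mul_sub_sub_le (hf : |f x| ≤ K) :
    |√y * (f y - f x) - (√y * f y - √x * f x)| ≤ K * |√y - √x| := by
  rw [show √y * (f y - f x) - (√y * f y - √x * f x) = -(f x * (√y - √x)) by ring, abs_neg,
    abs_mul]
  gcongr

lemma abs_le_of_abs_sqrt_mul_le (hx : 0 < x) (h : |√x * f x| ≤ K * √x) : |f x| ≤ K := by
  rw [abs_mul, abs_of_pos (Real.sqrt_pos.2 hx), mul_comm] at h
  exact le_of_mul_le_mul_right h (Real.sqrt_pos.2 hx)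

lemma holderOnWith_of_abs_sub_le {C s : ℝ≥0} {f : ℝ → ℝ} {t : Set ℝ}
    (h : ∀ x ∈ t, ∀ y ∈ t, |f x - f y| ≤ C * |x - y| ^ (s : ℝ)) : HolderOnWith C s f t := by
  intro x hx y hy
  rw [edist_dist, edist_dist, ENNReal.ofReal_rpow_of_nonneg dist_nonneg s.coe_nonneg,
    ← ENNReal.ofReal_coe_nnreal, ← ENNReal.ofReal_mul C.coe_nonneg]
  exact ENNReal.ofReal_le_ofReal (h x hx y hy)

lemma holderOnWith_half_of_sqrt_mul (hα : 0 < α) (hf : ∀ x, 0 < x → |f x| ≤ K)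
    (hg : ∀ x, 0 < x → ∀ y, 0 < y → |√y * f y - √x * f x| ≤ K * √|y - x|) :
    HolderOnWith (2 * K / √α).toNNReal (1 / 2) f (Set.Ici α) := by
  have hK : 0 ≤ K := (abs_nonneg _).trans (hf α hα)
  refine holderOnWith_of_abs_sub_le fun y hy x hx => ?_
  have hx0 : 0 < x := hα.trans_le hx
  have hy0 : 0 < y := hα.trans_le hy
  rw [Real.coe_toNNReal _ (by positivity), NNReal.coe_div, NNReal.coe_one, NNReal.coe_ofNat,
    ← Real.sqrt_eq_rpow, div_mul_eq_mul_div, le_div_iff₀ (Real.sqrt_pos.2 hα)]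
  calc |f y - f x| * √α ≤ |f y - f x| * √y := by
        gcongr
        exact hy
    _ = |√y * (f y - f x)| := by rw [abs_mul, abs_of_nonneg (Real.sqrt_nonneg y), mul_comm]
    _ ≤ |√y * f y - √x * f x| + K * |√y - √x| := by
        linarith [abs_sub_abs_le_abs_sub (√y * (f y - f x)) (√y * f y - √x * f x),
          abs_sqrt_mul_sub_sub_le (y := y) (hf x hx0)]
    _ ≤ K * √|y - x| + K * √|y - x| := by
        gcongr
        · exact hg x hx0 y hy0
        · exact abs_sqrt_sub_sqrt_le hx0.le hy0.le
    _ = 2 * K * √|y - x| := by ring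

lemma mul_sqrt_le_abs_sub_of_sqrt_mul {c β δ : ℝ} (hα : 0 < α) (hx : α ≤ x) (hy : α ≤ y)
    (hyβ : y ≤ β) (hδ : 0 ≤ δ) (hyx : |y - x| ≤ δ) (hδK : K * √δ ≤ c / 2 * √α)
    (hf : |f x| ≤ K) (hg : c * √δ ≤ |√y * f y - √x * f x|) :
    c / (2 * √β) * √δ ≤ |f y - f x| := by
  have hβ : 0 < √β := Real.sqrt_pos.2 (hα.trans_le (hy.trans hyβ))
  have hsqrtα : 0 < √α := Real.sqrt_pos.2 hα
  have herr : K * |√y - √x| ≤ c / 2 * √δ := by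
    have hK : 0 ≤ K := (abs_nonneg _).trans hf
    refine le_of_mul_le_mul_right ?_ hsqrtα
    calc K * |√y - √x| * √α ≤ K * δ := by
          rw [mul_assoc]
          gcongr
          exact (abs_sqrt_sub_sqrt_mul_sqrt_le hα.le hx (hα.le.trans hy)).trans hyx
      _ = K * √δ * √δ := by rw [mul_assoc, Real.mul_self_sqrt hδ]
      _ ≤ c / 2 * √α * √δ := by gcongr
      _ = c / 2 * √δ * √α := by ring
  have hmain : c / 2 * √δ ≤ |f y - f x| * √β := by
    calc c / 2 * √δ ≤ |√y * f y - √x * f x| - K * |√y - √x| := by linarith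
      _ ≤ |√y * (f y - f x)| := by
          rw [sub_le_comm]
          refine le_trans ?_ (abs_sqrt_mul_sub_sub_le hf)
          rw [abs_sub_comm (√y * (f y - f x))]
          exact abs_sub_abs_le_abs_sub _ _
      _ = |f y - f x| * √y := by rw [abs_mul, abs_of_nonneg (Real.sqrt_nonneg y), mul_comm]
      _ ≤ |f y - f x| * √β := by gcongr
  rwa [← div_div, div_mul_eq_mul_div, div_le_iff₀ hβ]

end DivSqrt

lemma eventually_mul_sqrt_le (K : ℝ) {d : ℝ} (hd : 0 < d) : ∀ᶠ δ in 𝓝[>] (0 : ℝ), K * √δ ≤ d := by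
  have hlim : Tendsto (fun δ : ℝ => K * √δ) (𝓝 0) (𝓝 0) := by
    simpa using (Real.continuous_sqrt.tendsto 0).const_mul K
  exact (hlim.mono_left nhdsWithin_le_nhds).eventually_le_const hd

/-- Every subinterval of `(α, β)` of small length `δ` contains two points whose values under `f`
differ by at least `c * δ ^ s`: a uniform converse of `s`-Hölder continuity. -/
def HasOscillationOn (c s : ℝ) (f : ℝ → ℝ) (α β : ℝ) : Prop :=
  ∀ᶠ δ in 𝓝[>] (0 : ℝ), ∀ u, α < u → u + δ < β →
    ∃ x ∈ Set.Icc u (u + δ), ∃ y ∈ Set.Icc u (u + δ), c * δ ^ s ≤ |f y - f x|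

lemma hasOscillationOn_half_of_sqrt_mul {f : ℝ → ℝ} {K c α β : ℝ} (hα : 0 < α) (hc : 0 < c)
    (hf : ∀ x, 0 < x → |f x| ≤ K)
    (hg : ∀ u δ : ℝ, 0 < u → 0 < δ → δ ≤ 1 →
      ∃ x ∈ Set.Icc u (u + δ), ∃ y ∈ Set.Icc u (u + δ), c * √δ ≤ |√y * f y - √x * f x|) :
    HasOscillationOn (c / (2 * √β)) (1 / 2) f α β := by
  filter_upwards [Ioc_mem_nhdsGT one_pos, eventually_mul_sqrt_le K (by positivity : 0 < c / 2 * √α)]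
    with δ hδ hδK u hαu huβ
  obtain ⟨x, hx, y, hy, hxy⟩ := hg u δ (hα.trans hαu) hδ.1 hδ.2
  have hαx : α ≤ x := hαu.le.trans hx.1
  refine ⟨x, hx, y, hy, ?_⟩
  rw [← Real.sqrt_eq_rpow]
  exact mul_sqrt_le_abs_sub_of_sqrt_mul hα hαx (hαu.le.trans hy.1) (hy.2.trans huβ.le) hδ.1.le
    (abs_sub_le_iff.2 ⟨by linarith [hx.1, hy.2], by linarith [hx.2, hy.1]⟩) hδK
    (hf x (hα.trans_le hαx)) hxy

/-! ### Mesh squares meeting a graph -/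

/-- The indices of the `δ`-mesh squares that meet `F`; their number is `meshCount F δ`. -/
def meshSquares (F : Set (ℝ × ℝ)) (δ : ℝ) : Set (ℤ × ℤ) :=
  {p | ((Set.Icc (p.1 * δ) ((p.1 + 1) * δ) ×ˢ Set.Icc (p.2 * δ) ((p.2 + 1) * δ)) ∩ F).Nonempty}

lemma meshCount_eq_ncard (F : Set (ℝ × ℝ)) (δ : ℝ) : meshCount F δ = (meshSquares F δ).ncard :=
  rfl

lemma mem_meshSquares_graphOn {f : ℝ → ℝ} {t : Set ℝ} {δ : ℝ} {m q : ℤ} :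
    (m, q) ∈ meshSquares (t.graphOn f) δ ↔
      ∃ x ∈ t, x ∈ Set.Icc (m * δ) ((m + 1) * δ) ∧ f x ∈ Set.Icc (q * δ) ((q + 1) * δ) := by
  constructor
  · rintro ⟨_, ⟨hx, hy⟩, x, hxt, rfl⟩
    exact ⟨x, hxt, hx, hy⟩
  · rintro ⟨x, hxt, hx, hy⟩
    exact ⟨(x, f x), ⟨hx, hy⟩, x, hxt, rfl⟩

/-- The indices `q` of the mesh intervals `[qδ, (q + 1)δ]` that meet `[a, b]`, when `a ≤ b`. -/
noncomputable def meshIntervals (δ a b : ℝ) : Finset ℤ := Finset.Icc (⌈a / δ⌉ - 1) ⌊b / δ⌋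

section meshIntervals

variable {δ a b : ℝ}

lemma mem_meshIntervals (hδ : 0 < δ) {q : ℤ} :
    q ∈ meshIntervals δ a b ↔ a ≤ (q + 1) * δ ∧ q * δ ≤ b := by
  rw [meshIntervals, Finset.mem_Icc, sub_le_iff_le_add, Int.ceil_le, Int.le_floor,
    div_le_iff₀ hδ, le_div_iff₀ hδ, Int.cast_add, Int.cast_one]

lemma card_meshIntervals_le (hδ : 0 < δ) (hab : a ≤ b) :
    (#(meshIntervals δ a b) : ℝ) ≤ (b - a) / δ + 2 := by
  have hle : a / δ ≤ b / δ := by gcongr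
  have hcard : ((⌊b / δ⌋ + 1 - (⌈a / δ⌉ - 1) : ℤ) : ℝ) ≤ (b - a) / δ + 2 := by
    push_cast
    rw [sub_div]
    linarith [Int.floor_le (b / δ), Int.le_ceil (a / δ)]
  rw [meshIntervals, Int.card_Icc, ← Int.cast_natCast, Int.toNat_eq_max, Int.cast_max]
  exact max_le hcard (by rw [Int.cast_zero, sub_div]; linarith)

lemma le_card_meshIntervals : (b - a) / δ ≤ #(meshIntervals δ a b) := by
  have hcard : (b - a) / δ ≤ ((⌊b / δ⌋ + 1 - (⌈a / δ⌉ - 1) : ℤ) : ℝ) := by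
    push_cast
    rw [sub_div]
    linarith [Int.lt_floor_add_one (b / δ), Int.ceil_lt_add_one (a / δ)]
  rw [meshIntervals, Int.card_Icc]
  exact hcard.trans (by exact_mod_cast Int.self_le_toNat _)

end meshIntervals

section Columns

variable {ι κ : Type*} {S : Set (ι × κ)} {I : Finset ι} {B : ι → Finset κ} {n : ℝ}

lemma finite_and_ncard_le_card_mul (hS : ∀ p ∈ S, p.1 ∈ I ∧ p.2 ∈ B p.1)
    (hB : ∀ m ∈ I, #(B m) ≤ n) : S.Finite ∧ S.ncard ≤ #I * n := by
  have hsub : S ⊆ (I.sigma B).map (Equiv.sigmaEquivProd ι κ).toEmbedding := by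
    rintro ⟨m, q⟩ hmq
    simpa using hS (m, q) hmq
  refine ⟨(Finset.finite_toSet _).subset hsub, ?_⟩
  calc (S.ncard : ℝ) ≤ ∑ m ∈ I, (#(B m) : ℝ) := by
        exact_mod_cast (Set.ncard_le_ncard hsub).trans_eq (by
          rw [Set.ncard_coe_finset, Finset.card_map, Finset.card_sigma])
    _ ≤ #I * n := by
        rw [← nsmul_eq_mul]
        exact Finset.sum_le_card_nsmul _ _ _ hB

lemma card_mul_le_ncard (hfin : S.Finite) (hS : ∀ m ∈ I, ∀ q ∈ B m, (m, q) ∈ S)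
    (hB : ∀ m ∈ I, n ≤ #(B m)) : #I * n ≤ S.ncard := by
  have hsub : ((I.sigma B).map (Equiv.sigmaEquivProd ι κ).toEmbedding : Set (ι × κ)) ⊆ S := by
    rintro ⟨m, q⟩ hmq
    have hmq : m ∈ I ∧ q ∈ B m := by simpa using hmq
    exact hS m hmq.1 q hmq.2
  calc #I * n ≤ ∑ m ∈ I, (#(B m) : ℝ) := by
        rw [← nsmul_eq_mul]
        exact Finset.card_nsmul_le_sum _ _ _ hB
    _ ≤ S.ncard := by
        rw [← Nat.cast_sum, ← Finset.card_sigma, ← Finset.card_map, ← Set.ncard_coe_finset]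
        exact_mod_cast Set.ncard_le_ncard hsub hfin

end Columns

/-! ### Box dimension of graphs of Hölder functions -/

section graphOn

variable {f : ℝ → ℝ} {α β δ : ℝ}

lemma exists_finset_column_cover {C s : ℝ≥0} {t : Set ℝ} (hf : HolderOnWith C s f t) (hδ : 0 < δ)
    (m : ℤ) : ∃ B : Finset ℤ, (∀ q, (m, q) ∈ meshSquares (t.graphOn f) δ → q ∈ B) ∧
      (#B : ℝ) ≤ 2 * C * δ ^ (s : ℝ) / δ + 2 := by
  have hrad : 0 ≤ C * δ ^ (s : ℝ) := by positivity
  rcases (t ∩ Set.Icc (m * δ) ((m + 1) * δ)).eq_empty_or_nonempty with hempty | ⟨x₀, hx₀t, hx₀⟩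
  · refine ⟨∅, fun q hq => ?_, by simp only [Finset.card_empty, Nat.cast_zero]; positivity⟩
    obtain ⟨x, hxt, hx, -⟩ := mem_meshSquares_graphOn.1 hq
    exact (hempty.subset ⟨hxt, hx⟩).elim
  · refine ⟨meshIntervals δ (f x₀ - C * δ ^ (s : ℝ)) (f x₀ + C * δ ^ (s : ℝ)), fun q hq => ?_, ?_⟩
    · obtain ⟨x, hxt, hx, hfx⟩ := mem_meshSquares_graphOn.1 hq
      have hdist : dist x x₀ ≤ δ := by
        rw [Real.dist_eq, abs_sub_le_iff]
        constructor <;> linarith [hx.1, hx.2, hx₀.1, hx₀.2]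
      have hfdist := abs_sub_le_iff.1 (hf.dist_le_of_le hxt hx₀t hdist)
      rw [mem_meshIntervals hδ]
      constructor <;> linarith [hfx.1, hfx.2]
    · refine (card_meshIntervals_le hδ (by linarith)).trans_eq ?_
      ring

lemma finite_and_meshCount_graphOn_le {C s : ℝ≥0} (hf : HolderOnWith C s f (Set.Ioo α β))
    (hαβ : α ≤ β) (hδ : 0 < δ) :
    (meshSquares ((Set.Ioo α β).graphOn f) δ).Finite ∧
      meshCount ((Set.Ioo α β).graphOn f) δ ≤
        ((β - α) / δ + 2) * (2 * C * δ ^ (s : ℝ) / δ + 2) := by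
  choose B hcover hcard using exists_finset_column_cover hf hδ
  have hS : ∀ p ∈ meshSquares ((Set.Ioo α β).graphOn f) δ,
      p.1 ∈ meshIntervals δ α β ∧ p.2 ∈ B p.1 := fun p hp => by
    obtain ⟨x, hxαβ, hx, -⟩ := mem_meshSquares_graphOn.1 hp
    exact ⟨(mem_meshIntervals hδ).2 ⟨hxαβ.1.le.trans hx.2, hx.1.trans hxαβ.2.le⟩, hcover _ _ hp⟩
  obtain ⟨hfin, hle⟩ := finite_and_ncard_le_card_mul hS fun m _ => hcard m
  rw [meshCount_eq_ncard]
  refine ⟨hfin, hle.trans ?_⟩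
  gcongr
  exact card_meshIntervals_le hδ hαβ

lemma exists_finset_subset_column {t : Set ℝ} {c x y : ℝ} {m : ℤ} (hδ : 0 < δ)
    (ht : Set.Icc (m * δ) ((m + 1) * δ) ⊆ t) (hf : ContinuousOn f t)
    (hx : x ∈ Set.Icc (m * δ) ((m + 1) * δ)) (hy : y ∈ Set.Icc (m * δ) ((m + 1) * δ))
    (hc : c ≤ |f y - f x|) :
    ∃ B : Finset ℤ, (∀ q ∈ B, (m, q) ∈ meshSquares (t.graphOn f) δ) ∧ c / δ ≤ #B := by
  wlog hxy : f x ≤ f y generalizing x y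
  · exact this hy hx (abs_sub_comm (f y) (f x) ▸ hc) (le_of_not_ge hxy)
  rw [abs_of_nonneg (sub_nonneg.2 hxy)] at hc
  refine ⟨meshIntervals δ (f x) (f y), fun q hq => ?_, le_trans (by gcongr) le_card_meshIntervals⟩
  obtain ⟨hfx, hfy⟩ := (mem_meshIntervals hδ).1 hq
  obtain ⟨z, hz, hfz⟩ := isPreconnected_Icc.intermediate_value hx hy (hf.mono ht)
    (⟨le_max_left _ _, max_le hxy hfy⟩ : max (f x) (q * δ) ∈ Set.Icc (f x) (f y))
  refine mem_meshSquares_graphOn.2 ⟨z, ht hz, hz, ?_⟩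
  rw [hfz]
  exact ⟨le_max_right _ _, max_le hfx (by gcongr; linarith)⟩

lemma mul_le_meshCount_graphOn {c : ℝ} (hf : ContinuousOn f (Set.Ioo α β)) (hδ : 0 < δ)
    (hfin : (meshSquares ((Set.Ioo α β).graphOn f) δ).Finite) (hc : 0 ≤ c)
    (hosc : ∀ u, α < u → u + δ < β →
      ∃ x ∈ Set.Icc u (u + δ), ∃ y ∈ Set.Icc u (u + δ), c ≤ |f y - f x|) :
    ((β - α) / δ - 4) * (c / δ) ≤ meshCount ((Set.Ioo α β).graphOn f) δ := by
  have hcolumn : ∀ m ∈ meshIntervals δ (α + 2 * δ) (β - 2 * δ), ∃ B : Finset ℤ,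
      (∀ q ∈ B, (m, q) ∈ meshSquares ((Set.Ioo α β).graphOn f) δ) ∧ c / δ ≤ #B := fun m hm => by
    obtain ⟨hαm, hmβ⟩ := (mem_meshIntervals hδ).1 hm
    obtain ⟨x, hx, y, hy, hxy⟩ := hosc (m * δ) (by linarith) (by linarith)
    rw [← add_one_mul] at hx hy
    exact exists_finset_subset_column hδ (Set.Icc_subset_Ioo (by linarith) (by linarith)) hf hx hy
      hxy
  choose! B hB hcard using hcolumn
  rw [meshCount_eq_ncard]
  refine le_trans ?_ (card_mul_le_ncard hfin hB hcard)
  gcongr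
  refine (le_of_eq ?_).trans le_card_meshIntervals
  field_simp
  ring

end graphOn

lemma tendsto_log_div_neg_log_of_isTheta {N : ℝ → ℝ} {d : ℝ}
    (hN : N =Θ[𝓝[>] 0] fun δ => δ ^ (-d)) :
    Tendsto (fun δ => Real.log (N δ) / (-Real.log δ)) (𝓝[>] 0) (𝓝 d) := by
  obtain ⟨C, hC, hle⟩ := hN.1.exists_pos
  obtain ⟨c, hc, hge⟩ := hN.2.exists_pos
  have hlim : ∀ a : ℝ,
      Tendsto (fun δ => Real.log a / (-Real.log δ) + d) (𝓝[>] 0) (𝓝 d) := fun a => by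
    simpa using ((tendsto_neg_atBot_atTop.comp Real.tendsto_log_nhdsGT_zero).const_div_atTop
      (Real.log a)).add_const d
  have hlog : ∀ a > 0, ∀ δ ∈ Set.Ioo (0 : ℝ) 1,
      Real.log a / (-Real.log δ) + d = Real.log (a * δ ^ (-d)) / (-Real.log δ) :=
    fun a ha δ hδ => by
      have hδlog := (Real.log_neg hδ.1 hδ.2).ne
      rw [Real.log_mul ha.ne' (Real.rpow_pos_of_pos hδ.1 _).ne', Real.log_rpow hδ.1]
      field_simp
      ring
  refine tendsto_of_tendsto_of_tendsto_of_le_of_le' (hlim c⁻¹) (hlim C) ?_ ?_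
  · filter_upwards [hge.bound, Ioo_mem_nhdsGT one_pos] with δ hge hδ
    have hpow := Real.rpow_pos_of_pos hδ.1 (-d)
    have hlogδ := Real.log_neg hδ.1 hδ.2
    rw [hlog _ (inv_pos.2 hc) δ hδ, ← Real.log_abs (N δ)]
    rw [Real.norm_of_nonneg hpow.le, Real.norm_eq_abs, ← inv_mul_le_iff₀ hc] at hge
    have : 0 < c⁻¹ * δ ^ (-d) := by positivity
    gcongr
    linarith
  · filter_upwards [hle.bound, hge.bound, Ioo_mem_nhdsGT one_pos] with δ hle hge hδ
    have hpow := Real.rpow_pos_of_pos hδ.1 (-d)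
    have hlogδ := Real.log_neg hδ.1 hδ.2
    rw [hlog C hC δ hδ, ← Real.log_abs (N δ)]
    rw [Real.norm_of_nonneg hpow.le, Real.norm_eq_abs] at hle hge
    have : 0 < |N δ| := pos_of_mul_pos_right (hpow.trans_le hge) hc.le
    gcongr
    linarith

lemma rpow_neg_two_sub {δ : ℝ} (hδ : 0 < δ) (s : ℝ) : δ ^ (-(2 - s)) = δ⁻¹ * (δ ^ s / δ) := by
  rw [neg_sub, Real.rpow_sub hδ, Real.rpow_two]
  field_simp

section IsTheta

variable {f : ℝ → ℝ} {α β c : ℝ} {C s : ℝ≥0}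

lemma meshCount_graphOn_isBigO (hf : HolderOnWith C s f (Set.Ioo α β)) (hαβ : α ≤ β)
    (hs1 : s ≤ 1) :
    (fun δ => (meshCount ((Set.Ioo α β).graphOn f) δ : ℝ)) =O[𝓝[>] 0]
      fun δ => δ ^ (-(2 - s : ℝ)) := by
  have := sub_nonneg.2 hαβ
  refine .of_bound ((β - α + 2) * (2 * C + 2)) ?_
  filter_upwards [Ioo_mem_nhdsGT one_pos] with δ hδ
  have hδpos : 0 < δ := hδ.1
  have hδinv : 1 ≤ δ⁻¹ := (one_le_inv₀ hδpos).2 hδ.2.le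
  have hδs : 1 ≤ δ ^ (s : ℝ) / δ := (one_le_div hδpos).2
    (Real.self_le_rpow_of_le_one hδpos.le hδ.2.le (by exact_mod_cast hs1))
  rw [rpow_neg_two_sub hδpos, Real.norm_natCast, Real.norm_of_nonneg (by positivity)]
  calc (meshCount ((Set.Ioo α β).graphOn f) δ : ℝ)
      ≤ ((β - α) / δ + 2) * (2 * C * δ ^ (s : ℝ) / δ + 2) :=
        (finite_and_meshCount_graphOn_le hf hαβ hδpos).2
    _ ≤ ((β - α + 2) * δ⁻¹) * ((2 * C + 2) * (δ ^ (s : ℝ) / δ)) := by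
        gcongr
        · rw [div_eq_mul_inv]
          linarith
        · rw [mul_div_assoc]
          linarith
    _ = (β - α + 2) * (2 * C + 2) * (δ⁻¹ * (δ ^ (s : ℝ) / δ)) := by ring

lemma isBigO_meshCount_graphOn (hf : HolderOnWith C s f (Set.Ioo α β)) (hαβ : α < β)
    (hs : 0 < s) (hc : 0 < c) (hosc : HasOscillationOn c s f α β) :
    (fun δ => δ ^ (-(2 - s : ℝ))) =O[𝓝[>] 0]
      fun δ => (meshCount ((Set.Ioo α β).graphOn f) δ : ℝ) := by
  have hlen : 0 < β - α := sub_pos.2 hαβ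
  refine .of_bound (2 / ((β - α) * c)) ?_
  filter_upwards [hosc, Ioo_mem_nhdsGT (by positivity : 0 < (β - α) / 8)] with δ hosc hδ
  have hδpos : 0 < δ := hδ.1
  have hcolumns : (β - α) / 2 * δ⁻¹ ≤ (β - α) / δ - 4 := by
    have : 8 ≤ (β - α) / δ := (le_div_iff₀ hδpos).2 (by linarith [hδ.2])
    rw [div_mul_eq_mul_div, ← div_eq_mul_inv]
    linarith
  rw [rpow_neg_two_sub hδpos, Real.norm_natCast, Real.norm_of_nonneg (by positivity)]
  calc δ⁻¹ * (δ ^ (s : ℝ) / δ)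
      = 2 / ((β - α) * c) * ((β - α) / 2 * δ⁻¹ * (c * δ ^ (s : ℝ) / δ)) := by field_simp
    _ ≤ 2 / ((β - α) * c) * (((β - α) / δ - 4) * (c * δ ^ (s : ℝ) / δ)) := by gcongr
    _ ≤ 2 / ((β - α) * c) * meshCount ((Set.Ioo α β).graphOn f) δ := by
        gcongr
        exact mul_le_meshCount_graphOn (hf.continuousOn hs) hδpos
          (finite_and_meshCount_graphOn_le hf hαβ.le hδpos).1 (by positivity) hosc

theorem tendsto_log_meshCount_graphOn (hf : HolderOnWith C s f (Set.Ioo α β)) (hαβ : α < β)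
    (hs : 0 < s) (hs1 : s ≤ 1) (hc : 0 < c) (hosc : HasOscillationOn c s f α β) :
    Tendsto (fun δ => Real.log (meshCount ((Set.Ioo α β).graphOn f) δ) / (-Real.log δ))
      (𝓝[>] 0) (𝓝 (2 - s)) :=
  tendsto_log_div_neg_log_of_isTheta
    ⟨meshCount_graphOn_isBigO hf hαβ.le hs1, isBigO_meshCount_graphOn hf hαβ hs hc hosc⟩

end IsTheta

/-- For any reals `0 < α < β`, the graph
`F = {(x, λ(x)) : α < x < β}` of the limit function
`λ(x) = lim_k ρ(⌊4^k x⌋)/√(4^k x)` (with `ρ(n) = M(n) + 1`) has box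
dimension `3/2`: `log N_δ(F)/(−log δ) → 3/2` as `δ → 0⁺`. -/
theorem boxDimension_graph_lambda
    (r : ℕ → ℤ) (hr0 : r 0 = 1)
    (hre : ∀ n, r (2 * n) = r n)
    (hro : ∀ n, r (2 * n + 1) = (-1) ^ n * r n)
    (M : ℕ → ℤ)
    (hM : ∀ n, IsGreatest (Set.range fun i => pSum r i n) (M n))
    (L : ℝ → ℝ)
    (hL : ∀ x : ℝ, 0 < x →
      Tendsto
        (fun k : ℕ => ((M (⌊(4 : ℝ) ^ k * x⌋).toNat + 1 : ℤ) : ℝ) / Real.sqrt ((4 : ℝ) ^ k * x))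
        atTop (nhds (L x)))
    (α β : ℝ) (hα : 0 < α) (hαβ : α < β) :
    Tendsto
      (fun δ : ℝ =>
        Real.log (meshCount {p : ℝ × ℝ | ∃ x : ℝ, α < x ∧ x < β ∧ p = (x, L x)} δ) /
          (-Real.log δ))
      (nhdsWithin 0 (Set.Ioi 0)) (nhds (3 / 2)) := by
  have hr : IsRudinShapiro r := ⟨hr0, hre, hro⟩
  have hmax : IsMaxWindowSum r M := hM
  have hlim : IsScalingLimit (fun n => M n) fun x => √x * L x :=
    isScalingLimit_sqrt_mul (c := 1) fun x hx => by simpa [Int.floor_toNat] using hL x hx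
  have hbdd : ∀ x, 0 < x → |L x| ≤ 18 := fun x hx =>
    abs_le_of_abs_sqrt_mul_le hx (hlim.abs_le (hr.abs_max_le_sqrt hmax) hx)
  have hholder := holderOnWith_half_of_sqrt_mul hα hbdd fun x hx y hy =>
    hlim.abs_sub_le (hr.abs_max_add_sub_le_sqrt hmax) hx hy
  have hosc : HasOscillationOn (1 / 3 / (2 * √β)) (1 / 2) L α β :=
    hasOscillationOn_half_of_sqrt_mul hα (by norm_num) hbdd fun u δ hu hδ hδ1 =>
      hlim.exists_le_abs_sub (b := 2) (fun n hn => by exact_mod_cast hr.max_four_mul hmax hn)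
        (fun n => by exact_mod_cast (hmax.abs_succ_sub hr.eq_one_or_eq_neg_one n).ge) hu hδ hδ1
  have hgraph : {p : ℝ × ℝ | ∃ x, α < x ∧ x < β ∧ p = (x, L x)} = (Set.Ioo α β).graphOn L := by
    ext p
    simp [Set.graphOn, and_assoc, eq_comm]
  have hβ : 0 < √β := Real.sqrt_pos.2 (hα.trans hαβ)
  rw [hgraph, show (3 / 2 : ℝ) = 2 - (1 / 2 : ℝ≥0) by norm_num]
  exact tendsto_log_meshCount_graphOn (hholder.mono fun x hx => hx.1.le) hαβ (by norm_num)
    (by norm_num) (by positivity : 0 < 1 / 3 / (2 * √β)) (by simpa using hosc)
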